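/- Let 𝒰 ⊆ B(K₁,L₁) and 𝒱 ⊆ B(H₂,K₂) be ternary rings of operators, let H and L be complex Hilbert spaces, and let θ : 𝒰 ⊗ 𝒱 → B(H,L) be a linear map on the algebraic tensor product such that for every p ∈ ℕ and all u_{i,j} ∈ 𝒰, v_{i,j} ∈ 𝒱 (i ∈ {1,2,3}, j ∈ {1,…,p}), setting x_i = Σ_{j=1}^p u_{i,j} ⊗ v_{i,j}, one has Σ_{j,k,l=1}^p θ(u_{1,j}u_{2,k}*u_{3,l} ⊗ v_{1,j}v_{2,k}*v_{3,l}) = θ(x₁) θ(x₂)* θ(x₃). Then there exist a complex Hilbert space K and semi-commuting ternary morphisms φ : 𝒰 → B(K,L) and ψ : 𝒱 → B(H,K) such that θ(u ⊗ v) = φ(u) ψ(v) for all u ∈ 𝒰 and v ∈ 𝒱. -/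

import Mathlib

open ContinuousLinearMap
open scoped TensorProduct

universe u

/-- A bundled complex Hilbert space. -/
structure HilbertC : Type (u + 1) where
  carrier : Type u
  [nacg : NormedAddCommGroup carrier]
  [ips : InnerProductSpace ℂ carrier]
  [cs : CompleteSpace carrier]

attribute [instance] HilbertC.nacg HilbertC.ips HilbertC.cs

/-- A linear map `φ` on a TRO `𝒰 ⊆ B(K₀, L₀)` is a ternary morphism if it
satisfies `φ(S T* R) = φ(S) φ(T)* φ(R)` for all `S, T, R ∈ 𝒰`. -/
def IsTernaryHom
    {K₀ L₀ K L : Type*}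
    [NormedAddCommGroup K₀] [InnerProductSpace ℂ K₀] [CompleteSpace K₀]
    [NormedAddCommGroup L₀] [InnerProductSpace ℂ L₀] [CompleteSpace L₀]
    [NormedAddCommGroup K] [InnerProductSpace ℂ K] [CompleteSpace K]
    [NormedAddCommGroup L] [InnerProductSpace ℂ L] [CompleteSpace L]
    (𝒰 : Submodule ℂ (K₀ →L[ℂ] L₀)) (φ : ↥𝒰 →ₗ[ℂ] (K →L[ℂ] L)) : Prop :=
  ∀ (s t r : 𝒰)
    (h : (s : K₀ →L[ℂ] L₀) ∘L (adjoint (t : K₀ →L[ℂ] L₀)) ∘L (r : K₀ →L[ℂ] L₀) ∈ 𝒰),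
    φ ⟨(s : K₀ →L[ℂ] L₀) ∘L (adjoint (t : K₀ →L[ℂ] L₀)) ∘L (r : K₀ →L[ℂ] L₀), h⟩
      = φ s ∘L (adjoint (φ t)) ∘L φ r

open scoped ComplexOrder InnerProductSpace

section aux1

theorem aux_kernel_dil {X L : Type u} [NormedAddCommGroup L] [InnerProductSpace ℂ L]
    [CompleteSpace L] (K : Matrix X X (L →L[ℂ] L)) (hK : K.IsHermitian)
    (hpos : ∀ (vv : X →₀ L),
      0 ≤ RCLike.re (vv.sum fun x w ↦ vv.sum fun x' w' ↦ ⟪K x' x w, w'⟫_ℂ)) :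
    ∃ (𝕂 : HilbertC.{u}) (Γ : X → L →L[ℂ] 𝕂.carrier),
      (∀ x y, adjoint (Γ x) ∘L Γ y = K x y) ∧
      ∀ k, (∀ x l, ⟪Γ x l, k⟫_ℂ = 0) → k = 0 := by
  have hps : K.PosSemidef := by
    have e := (RKHS.posSemidef_tfae (K := K)).out 0 2
    exact e.mpr ⟨hK, hpos⟩
  haveI : Fact K.PosSemidef := ⟨hps⟩
  refine ⟨⟨RKHS.OfKernel K⟩, RKHS.kerFun (RKHS.OfKernel K), fun x y => ?_, fun k hk => ?_⟩
  · have := RKHS.kernel_apply (RKHS.OfKernel K) x y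
    rw [RKHS.OfKernel.kernel_ofKernel] at this
    exact this.symm
  · refine RKHS.ext fun x => ?_
    refine ext_inner_left ℂ fun v => ?_
    have := hk x v
    rw [RKHS.kerFun_inner] at this
    simpa using this

variable {Y E E' : Type*} [AddCommGroup Y] [Module ℂ Y]
  [NormedAddCommGroup E] [InnerProductSpace ℂ E] [CompleteSpace E]
  [NormedAddCommGroup E'] [InnerProductSpace ℂ E'] [CompleteSpace E']

theorem aux_zero (Θ : Y →ₗ[ℂ] E) (A : E →L[ℂ] E') (h1 : ∀ y, A (Θ y) = 0)
    (h2 : ∀ z, (∀ y, ⟪Θ y, z⟫_ℂ = 0) → A z = 0) : A = 0 := by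
  set F := (LinearMap.range Θ).topologicalClosure with hF
  have hA : ∀ f ∈ F, A f = 0 := by
    have : F ≤ LinearMap.ker A.toLinearMap := by
      apply Submodule.topologicalClosure_minimal
      · rintro _ ⟨y, rfl⟩
        exact h1 y
      · exact A.isClosed_ker
    intro f hf
    exact this hf
  haveI : CompleteSpace F := (Submodule.isClosed_topologicalClosure _).completeSpace_coe
  ext z
  obtain ⟨f, hf, g, hg, rfl⟩ := F.exists_add_mem_mem_orthogonal z
  rw [map_add, hA f hf, h2 g]
  · simp
  · intro y
    exact hg _ (Submodule.le_topologicalClosure _ ⟨y, rfl⟩)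

theorem aux_ext (Θ : Y →ₗ[ℂ] E) (A : Y →ₗ[ℂ] E') (C : ℝ)
    (h : ∀ y, ‖A y‖ ≤ C * ‖Θ y‖) :
    ∃ R : E →L[ℂ] E', (∀ y, R (Θ y) = A y) ∧ ∀ z, (∀ y, ⟪Θ y, z⟫_ℂ = 0) → R z = 0 := by
  set F := (LinearMap.range Θ).topologicalClosure with hF
  haveI : CompleteSpace F := (Submodule.isClosed_topologicalClosure _).completeSpace_coe
  let e : Y →ₗ[ℂ] F := Θ.codRestrict F
    (fun y => Submodule.le_topologicalClosure _ ⟨y, rfl⟩)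
  have hd : DenseRange e := by
    intro ⟨z, hz⟩
    rw [closure_subtype]
    have : (Subtype.val '' Set.range e) = (LinearMap.range Θ : Set E) := by
      ext w
      constructor
      · rintro ⟨_, ⟨y, rfl⟩, rfl⟩
        exact ⟨y, rfl⟩
      · rintro ⟨y, rfl⟩
        exact ⟨e y, ⟨y, rfl⟩, rfl⟩
    rw [this]
    exact hz
  refine ⟨(A.extendOfNorm e) ∘L F.orthogonalProjectionOnto, fun y => ?_, fun z hz => ?_⟩
  · have h1 : F.orthogonalProjectionOnto (Θ y) = e y :=
      Submodule.orthogonalProjectionOnto_mem_subspace_eq_self (e y)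
    rw [comp_apply, h1]
    exact LinearMap.extendOfNorm_eq hd ⟨C, h⟩ y
  · have : z ∈ Fᗮ := by
      rw [hF, Submodule.orthogonal_closure]
      rintro _ ⟨y, rfl⟩
      exact hz y
    rw [comp_apply, Submodule.orthogonalProjection_mem_subspace_orthogonalComplement_eq_zero this,
      map_zero]

/-- `R` represents `T` through `Θ`. -/
def AuxRep (Θ : Y →ₗ[ℂ] E) (T : Y →ₗ[ℂ] Y) (R : E →L[ℂ] E) : Prop :=
  (∀ y, R (Θ y) = Θ (T y)) ∧ ∀ z, (∀ y, ⟪Θ y, z⟫_ℂ = 0) → R z = 0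

/-- formal adjoints. -/
def AuxAdj (Θ : Y →ₗ[ℂ] E) (T T' : Y →ₗ[ℂ] Y) : Prop :=
  ∀ y z, ⟪Θ y, Θ (T z)⟫_ℂ = ⟪Θ (T' y), Θ z⟫_ℂ

theorem AuxRep.uniq {Θ : Y →ₗ[ℂ] E} {T : Y →ₗ[ℂ] Y} {R S : E →L[ℂ] E}
    (h : AuxRep Θ T R) (h' : AuxRep Θ T S) : R = S := by
  rw [← sub_eq_zero]
  refine aux_zero Θ _ (fun y => ?_) (fun z hz => ?_)
  · simp [h.1, h'.1]
  · simp [h.2 z hz, h'.2 z hz]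

theorem AuxRep.comp {Θ : Y →ₗ[ℂ] E} {T T' : Y →ₗ[ℂ] Y} {R S : E →L[ℂ] E}
    (h : AuxRep Θ T R) (h' : AuxRep Θ T' S) : AuxRep Θ (T ∘ₗ T') (R ∘L S) :=
  ⟨fun y => by simp [h.1, h'.1], fun z hz => by simp [h'.2 z hz]⟩

theorem AuxRep.add {Θ : Y →ₗ[ℂ] E} {T T' : Y →ₗ[ℂ] Y} {R S : E →L[ℂ] E}
    (h : AuxRep Θ T R) (h' : AuxRep Θ T' S) : AuxRep Θ (T + T') (R + S) :=
  ⟨fun y => by simp [h.1, h'.1], fun z hz => by simp [h'.2 z hz, h.2 z hz]⟩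

theorem AuxRep.smul {Θ : Y →ₗ[ℂ] E} {T : Y →ₗ[ℂ] Y} {R : E →L[ℂ] E}
    (h : AuxRep Θ T R) (c : ℂ) : AuxRep Θ (c • T) (c • R) :=
  ⟨fun y => by simp [h.1], fun z hz => by simp [h.2 z hz]⟩

theorem AuxRep.adj {Θ : Y →ₗ[ℂ] E} {T T' : Y →ₗ[ℂ] Y} {R S : E →L[ℂ] E}
    (h : AuxRep Θ T R) (h' : AuxRep Θ T' S) (ha : AuxAdj Θ T T') : adjoint R = S := by
  rw [← sub_eq_zero]
  refine aux_zero Θ _ (fun y => ?_) (fun z hz => ?_)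
  · have : (innerSL ℂ (Θ y)) ∘L R - innerSL ℂ (S (Θ y)) = 0 := by
      refine aux_zero Θ _ (fun w => ?_) (fun z hz => ?_)
      · simp [h.1, h'.1, ha y w]
      · simp [h.2 z hz, h'.1, hz]
    refine ext_inner_right ℂ fun w => ?_
    have h3 := congrArg (fun f => f w) this
    simpa [adjoint_inner_left, inner_sub_left] using h3
  · have : (innerSL ℂ z) ∘L R = 0 := by
      refine aux_zero Θ _ (fun w => ?_) (fun z' hz' => ?_)
      · simp [h.1]
        rw [← inner_conj_symm, hz, map_zero]
      · simp [h.2 z' hz']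
    have h4 : adjoint R z = 0 := by
      refine ext_inner_right ℂ fun w => ?_
      have h3 := congrArg (fun f => f w) this
      simpa [adjoint_inner_left, inner_sub_left] using h3
    simp [h4, h'.2 z hz]

theorem aux_rep_exists {Θ : Y →ₗ[ℂ] E} {T T' D D' : Y →ₗ[ℂ] Y} (hT : AuxAdj Θ T T')
    (hD : AuxAdj Θ D D') (c : ℝ)
    (hc : ∀ y, T' (T y) + D' (D y) = ((c : ℂ) ^ 2) • y) : ∃ R, AuxRep Θ T R := by
  refine aux_ext Θ (Θ ∘ₗ T) |c| fun y => ?_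
  have h1 : ⟪Θ (T y), Θ (T y)⟫_ℂ + ⟪Θ (D y), Θ (D y)⟫_ℂ = (c : ℂ) ^ 2 * ⟪Θ y, Θ y⟫_ℂ := by
    rw [hT, hD, ← inner_add_left, ← map_add, hc, map_smul, inner_smul_left]
    simp
  simp only [inner_self_eq_norm_sq_to_K] at h1
  have h2 : ‖Θ (T y)‖ ^ 2 + ‖Θ (D y)‖ ^ 2 = c ^ 2 * ‖Θ y‖ ^ 2 := by have := congrArg Complex.re h1; simpa [← Complex.ofReal_pow, ← Complex.ofReal_mul] using this
  rw [LinearMap.comp_apply]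
  refine (sq_le_sq₀ (norm_nonneg _) (by positivity)).mp ?_
  rw [mul_pow, sq_abs]
  nlinarith [sq_nonneg ‖Θ (D y)‖]

end aux1

section aux2

variable {K L : Type*}
  [NormedAddCommGroup K] [InnerProductSpace ℂ K] [CompleteSpace K]
  [NormedAddCommGroup L] [InnerProductSpace ℂ L] [CompleteSpace L]

/-- Left multiplier predicate. -/
def AuxP (𝒰 : Submodule ℂ (K →L[ℂ] L)) (a : L →L[ℂ] L) : Prop :=
  (∀ u ∈ 𝒰, a ∘L u ∈ 𝒰) ∧ ∀ u ∈ 𝒰, adjoint a ∘L u ∈ 𝒰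

theorem AuxP.mul {𝒰 : Submodule ℂ (K →L[ℂ] L)} {a b : L →L[ℂ] L} (ha : AuxP 𝒰 a)
    (hb : AuxP 𝒰 b) : AuxP 𝒰 (a * b) := by
  refine ⟨fun u hu => ?_, fun u hu => ?_⟩
  · have h1 := ha.1 _ (hb.1 u hu)
    rw [← comp_assoc] at h1
    exact h1
  · have h1 := hb.2 _ (ha.2 u hu)
    rw [← comp_assoc, ← adjoint_comp] at h1
    exact h1

theorem AuxP.add {𝒰 : Submodule ℂ (K →L[ℂ] L)} {a b : L →L[ℂ] L} (ha : AuxP 𝒰 a)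
    (hb : AuxP 𝒰 b) : AuxP 𝒰 (a + b) := by
  refine ⟨fun u hu => ?_, fun u hu => ?_⟩
  · rw [add_comp]
    exact 𝒰.add_mem (ha.1 u hu) (hb.1 u hu)
  · have : adjoint (a + b) = adjoint a + adjoint b := star_add a b
    rw [this, add_comp]
    exact 𝒰.add_mem (ha.2 u hu) (hb.2 u hu)

theorem AuxP.scalar (𝒰 : Submodule ℂ (K →L[ℂ] L)) (c : ℂ) :
    AuxP 𝒰 (algebraMap ℂ (L →L[ℂ] L) c) := by
  have key : ∀ c : ℂ, ∀ u ∈ 𝒰, (algebraMap ℂ (L →L[ℂ] L) c) ∘L u ∈ 𝒰 := by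
    intro c u hu
    rw [Algebra.algebraMap_eq_smul_one, smul_comp]
    exact 𝒰.smul_mem _ hu
  refine ⟨key c, ?_⟩
  have : adjoint (algebraMap ℂ (L →L[ℂ] L) c) = algebraMap ℂ (L →L[ℂ] L) (star c) :=
    (algebraMap_star_comm c).symm
  rw [this]
  exact key _

theorem AuxP.star {𝒰 : Submodule ℂ (K →L[ℂ] L)} {a : L →L[ℂ] L} (ha : AuxP 𝒰 a) :
    AuxP 𝒰 (star a) := by
  refine ⟨ha.2, ?_⟩
  rw [star_eq_adjoint, adjoint_adjoint]
  exact ha.1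

/-- Left multipliers of a space of operators. -/
def auxMul (𝒰 : Submodule ℂ (K →L[ℂ] L)) : StarSubalgebra ℂ (L →L[ℂ] L) where
  carrier := {a | AuxP 𝒰 a}
  mul_mem' := AuxP.mul
  add_mem' := AuxP.add
  algebraMap_mem' := AuxP.scalar 𝒰
  star_mem' := AuxP.star

theorem auxMul_closed (𝒰 : Submodule ℂ (K →L[ℂ] L))
    (h : IsClosed (𝒰 : Set (K →L[ℂ] L))) : IsClosed (auxMul 𝒰 : Set (L →L[ℂ] L)) := by
  have : (auxMul 𝒰 : Set (L →L[ℂ] L)) =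
      (⋂ u ∈ 𝒰, {a | a ∘L u ∈ 𝒰}) ∩ ⋂ u ∈ 𝒰, {a | adjoint a ∘L u ∈ 𝒰} := by
    ext a
    simp only [Set.mem_inter_iff, Set.mem_iInter]
    rfl
  rw [this]
  refine IsClosed.inter ?_ ?_
  · refine isClosed_biInter fun u _ => ?_
    exact h.preimage (f := fun a : L →L[ℂ] L => a ∘L u) (by fun_prop)
  · refine isClosed_biInter fun u _ => ?_
    have hc : Continuous (fun a : L →L[ℂ] L => adjoint a) :=
      (adjoint (𝕜 := ℂ) (E := L) (F := L)).continuous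
    exact h.preimage (f := fun a : L →L[ℂ] L => adjoint a ∘L u) (by fun_prop)

theorem auxMul_sqrt (𝒰 : Submodule ℂ (K →L[ℂ] L))
    (h : IsClosed (𝒰 : Set (K →L[ℂ] L))) (a : L →L[ℂ] L) (ha : a ∈ auxMul 𝒰)
    (hp : a.IsPositive) : ∃ d ∈ auxMul 𝒰, star d = d ∧ d * d = a := by
  have h0 : 0 ≤ a := (nonneg_iff_isPositive a).mpr hp
  haveI := auxMul_closed 𝒰 h
  refine ⟨cfc Real.sqrt a, cfc_mem Real.sqrt ha, ?_, ?_⟩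
  · exact cfc_predicate (R := ℝ) Real.sqrt a
  · rw [← cfc_mul Real.sqrt Real.sqrt a]
    have : cfc (fun x : ℝ => √x * √x) a = cfc (fun x : ℝ => x) a := by
      refine cfc_congr fun x hx => ?_
      exact Real.mul_self_sqrt (spectrum_nonneg_of_nonneg h0 hx)
    rw [this]
    exact cfc_id' ℝ a

theorem auxMul_defect {K' : Type*} [NormedAddCommGroup K'] [InnerProductSpace ℂ K']
    [CompleteSpace K'] (𝒰 : Submodule ℂ (K →L[ℂ] L))
    (h : IsClosed (𝒰 : Set (K →L[ℂ] L))) (v : K' →L[ℂ] L) (hv : v ∘L adjoint v ∈ auxMul 𝒰) :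
    ∃ d ∈ auxMul 𝒰, star d = d ∧ v ∘L adjoint v + d * d = ((‖v‖ : ℂ) ^ 2) • 1 := by
  obtain ⟨d, hd, hs, hdd⟩ := auxMul_sqrt 𝒰 h (((‖v‖ : ℂ) ^ 2) • 1 - v ∘L adjoint v)
    (sub_mem ((auxMul 𝒰).smul_mem (one_mem _) _) hv) (by
      rw [isPositive_def']
      constructor
      · refine IsSelfAdjoint.sub ?_ ?_
        · rw [IsSelfAdjoint, star_smul]
          simp
        · rw [IsSelfAdjoint, star_eq_adjoint, adjoint_comp, adjoint_adjoint]
      · intro x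
        rw [reApplyInnerSelf_apply]
        have h1 : ⟪v (adjoint v x), x⟫_ℂ = (‖adjoint v x‖ : ℂ) ^ 2 := by
          rw [← adjoint_inner_right, inner_self_eq_norm_sq_to_K]
          rfl
        have h2 : ‖adjoint v x‖ ≤ ‖v‖ * ‖x‖ := by
          have := (adjoint v).le_opNorm x
          rwa [LinearIsometryEquiv.norm_map] at this
        have h3 : ⟪(((‖v‖ : ℂ) ^ 2) • (1 : L →L[ℂ] L) - v ∘L adjoint v) x, x⟫_ℂ
            = ((‖v‖ ^ 2 * ‖x‖ ^ 2 - ‖adjoint v x‖ ^ 2 : ℝ) : ℂ) := by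
          rw [sub_apply, inner_sub_left, comp_apply, h1, smul_apply, inner_smul_left,
            one_apply_eq_self, inner_self_eq_norm_sq_to_K]
          simp
        rw [h3]
        have h4 : ‖adjoint v x‖ ^ 2 ≤ (‖v‖ * ‖x‖) ^ 2 := by gcongr
        simp only [RCLike.re_to_complex, Complex.ofReal_re]
        nlinarith)
  exact ⟨d, hd, hs, by rw [hdd]; abel⟩

theorem auxMul_pair (𝒰 : Submodule ℂ (K →L[ℂ] L))
    (htro : ∀ S ∈ 𝒰, ∀ T ∈ 𝒰, ∀ R ∈ 𝒰, S ∘L (adjoint T) ∘L R ∈ 𝒰)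
    {u u' : K →L[ℂ] L} (hu : u ∈ 𝒰) (hu' : u' ∈ 𝒰) : u ∘L adjoint u' ∈ auxMul 𝒰 := by
  refine ⟨fun w hw => htro _ hu _ hu' _ hw, fun w hw => ?_⟩
  rw [adjoint_comp, adjoint_adjoint]
  exact htro _ hu' _ hu _ hw

theorem auxMul_matrix (𝒰 : Submodule ℂ (K →L[ℂ] L))
    (h : IsClosed (𝒰 : Set (K →L[ℂ] L)))
    (htro : ∀ S ∈ 𝒰, ∀ T ∈ 𝒰, ∀ R ∈ 𝒰, S ∘L (adjoint T) ∘L R ∈ 𝒰)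
    {n : Type*} [Fintype n] (u : n → K →L[ℂ] L) (hu : ∀ i, u i ∈ 𝒰) :
    ∃ c : n → n → auxMul 𝒰, ∀ i j,
      ∑ k, star (c k i : L →L[ℂ] L) * (c k j : L →L[ℂ] L) = u i ∘L adjoint (u j) := by
  classical
  let P : n → (PiLp 2 (fun _ : n => L) →L[ℂ] L) := fun i => PiLp.proj 2 (fun _ : n => L) i
  have hPI : ∀ i y j, P i (adjoint (P j) y) = if i = j then y else 0 := by
    intro i y j
    have : adjoint (P j) y = WithLp.toLp 2 (Pi.single j y) := by
      refine ext_inner_right ℂ fun x => ?_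
      rw [adjoint_inner_left, PiLp.inner_apply]
      rw [Finset.sum_eq_single j]
      · simp [P]
      · intro b _ hb
        simp [Pi.single_eq_of_ne hb]
      · simp
    rw [this]
    simp [P, Pi.single_apply]
  have hIP : ∑ i, adjoint (P i) ∘L P i = 1 := by
    ext1 x
    refine ext_inner_right ℂ fun y => ?_
    simp [sum_apply, sum_inner, adjoint_inner_left, PiLp.inner_apply, P]
  let 𝒲 : Submodule ℂ (K →L[ℂ] PiLp 2 (fun _ : n => L)) :=
    { carrier := {X | ∀ i, P i ∘L X ∈ 𝒰}
      add_mem' := by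
        intro X Y hX hY i
        rw [comp_add]
        exact 𝒰.add_mem (hX i) (hY i)
      zero_mem' := by
        intro i
        rw [comp_zero]
        exact 𝒰.zero_mem
      smul_mem' := by
        intro c X hX i
        rw [comp_smul]
        exact 𝒰.smul_mem _ (hX i) }
  have h𝒲 : IsClosed (𝒲 : Set (K →L[ℂ] PiLp 2 (fun _ : n => L))) := by
    have : (𝒲 : Set (K →L[ℂ] PiLp 2 (fun _ : n => L))) = ⋂ i, {X | P i ∘L X ∈ 𝒰} := by
      ext X
      simp only [Set.mem_iInter]
      rfl
    rw [this]
    refine isClosed_iInter fun i => ?_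
    exact h.preimage (f := fun X : K →L[ℂ] PiLp 2 (fun _ : n => L) => P i ∘L X) (by fun_prop)
  let X : K →L[ℂ] PiLp 2 (fun _ : n => L) := ∑ i, adjoint (P i) ∘L u i
  have hPX : ∀ i, P i ∘L X = u i := by
    intro i
    ext x
    simp [X, sum_apply, hPI]
  have hX : X ∘L adjoint X ∈ auxMul 𝒲 := by
    have key : ∀ Z ∈ 𝒲, (X ∘L adjoint X) ∘L Z ∈ 𝒲 := by
      intro Z hZ i
      have : P i ∘L (X ∘L adjoint X) ∘L Z = ∑ k, u i ∘L adjoint (u k) ∘L (P k ∘L Z) := by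
        have h1 : adjoint X ∘L Z = ∑ k, adjoint (u k) ∘L (P k ∘L Z) := by
          have : adjoint X ∘L Z = adjoint X ∘L ((∑ i, adjoint (P i) ∘L P i) ∘L Z) := by
            rw [hIP]; rfl
          rw [this]
          ext x
          simp only [comp_apply, sum_apply, map_sum]
          refine Finset.sum_congr rfl fun k _ => ?_
          rw [← hPX k, adjoint_comp]
          rfl
        calc _ = (P i ∘L X) ∘L (adjoint X ∘L Z) := rfl
          _ = _ := by
            rw [hPX, h1]
            ext x
            simp [sum_apply]
      rw [this]
      exact 𝒰.sum_mem fun k _ => htro _ (hu i) _ (hu k) _ (hZ k)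
    refine ⟨key, ?_⟩
    rw [adjoint_comp, adjoint_adjoint]
    exact key
  obtain ⟨C, hC, hCs, hCC⟩ := auxMul_sqrt 𝒲 h𝒲 _ hX (by
    have := IsPositive.conj_adjoint (isPositive_one (𝕜 := ℂ) (E := K)) X
    have h1 : X ∘L (1 : K →L[ℂ] K) ∘L adjoint X = X ∘L adjoint X := by
      ext1 x
      simp only [comp_apply, one_apply_eq_self]
    rwa [h1] at this)
  have hc : ∀ i j, P i ∘L C ∘L adjoint (P j) ∈ auxMul 𝒰 := by
    have key : ∀ i j, ∀ w ∈ 𝒰, (P i ∘L C ∘L adjoint (P j)) ∘L w ∈ 𝒰 := by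
      intro i j w hw
      have : adjoint (P j) ∘L w ∈ 𝒲 := by
        intro k
        by_cases hkj : k = j
        · have : P k ∘L adjoint (P j) ∘L w = w := by
            ext x
            simp [hPI, hkj]
          rw [this]; exact hw
        · have : P k ∘L adjoint (P j) ∘L w = 0 := by
            ext x
            simp [hPI, hkj]
          rw [this]; exact 𝒰.zero_mem
      exact hC.1 _ this i
    intro i j
    refine ⟨key i j, ?_⟩
    have : adjoint (P i ∘L C ∘L adjoint (P j)) = P j ∘L C ∘L adjoint (P i) := by
      rw [adjoint_comp, adjoint_comp, adjoint_adjoint]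
      rw [star_eq_adjoint] at hCs
      rw [hCs]
      rfl
    rw [this]
    exact key j i
  refine ⟨fun i j => ⟨_, hc i j⟩, fun i j => ?_⟩
  have hstar : ∀ k i, star (P k ∘L C ∘L adjoint (P i)) = P i ∘L C ∘L adjoint (P k) := by
    intro k i
    rw [star_eq_adjoint, adjoint_comp, adjoint_comp, adjoint_adjoint]
    rw [star_eq_adjoint] at hCs
    rw [hCs]
    rfl
  simp only [hstar]
  calc _ = P i ∘L C ∘L (∑ k, adjoint (P k) ∘L P k) ∘L C ∘L adjoint (P j) := by
        ext x
        simp [sum_apply]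
    _ = P i ∘L (C * C) ∘L adjoint (P j) := by rw [hIP]; rfl
    _ = (P i ∘L X) ∘L adjoint (P j ∘L X) := by rw [hCC, adjoint_comp]; rfl
    _ = _ := by rw [hPX, hPX]

/-- Left multiplication on the space. -/
def auxLm (𝒰 : Submodule ℂ (K →L[ℂ] L)) (a : auxMul 𝒰) : 𝒰 →ₗ[ℂ] 𝒰 where
  toFun u := ⟨(a : L →L[ℂ] L) ∘L u, a.2.1 _ u.2⟩
  map_add' u v := by
    ext1
    simp
  map_smul' c v := by
    ext1
    simp

end aux2

section aux3

/-- Left multiplication as an algebra homomorphism. -/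
noncomputable def auxLmHom {K L : Type*}
    [NormedAddCommGroup K] [InnerProductSpace ℂ K] [CompleteSpace K]
    [NormedAddCommGroup L] [InnerProductSpace ℂ L] [CompleteSpace L]
    (𝒰 : Submodule ℂ (K →L[ℂ] L)) : auxMul 𝒰 →ₐ[ℂ] Module.End ℂ 𝒰 :=
  AlgHom.ofLinearMap
    { toFun := auxLm 𝒰
      map_add' := by
        intro a b
        ext1 u
        ext1
        exact add_comp _ _ _
      map_smul' := by
        intro c a
        ext1 u
        ext1
        exact smul_comp _ _ _ }
    (by
      ext1 u
      ext1
      exact ContinuousLinearMap.id_comp _)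
    (by
      intro a b
      ext1 u
      ext1
      exact comp_assoc _ _ _)

theorem auxLmHom_coe {K L : Type*}
    [NormedAddCommGroup K] [InnerProductSpace ℂ K] [CompleteSpace K]
    [NormedAddCommGroup L] [InnerProductSpace ℂ L] [CompleteSpace L]
    (𝒰 : Submodule ℂ (K →L[ℂ] L)) (a : auxMul 𝒰) (u : 𝒰) :
    ((auxLmHom 𝒰 a u : 𝒰) : K →L[ℂ] L) = (a : L →L[ℂ] L) ∘L (u : K →L[ℂ] L) := rfl

theorem aux_repr {K L Y E : Type*}
    [NormedAddCommGroup K] [InnerProductSpace ℂ K] [CompleteSpace K]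
    [NormedAddCommGroup L] [InnerProductSpace ℂ L] [CompleteSpace L]
    [AddCommGroup Y] [Module ℂ Y]
    [NormedAddCommGroup E] [InnerProductSpace ℂ E] [CompleteSpace E]
    (𝒰 : Submodule ℂ (K →L[ℂ] L)) (h : IsClosed (𝒰 : Set (K →L[ℂ] L)))
    (Θ : Y →ₗ[ℂ] E) (β : auxMul 𝒰 →ₐ[ℂ] Module.End ℂ Y)
    (hβ : ∀ a, AuxAdj Θ (β a) (β (star a))) :
    ∃ ρ : auxMul 𝒰 →ₗ[ℂ] (E →L[ℂ] E), (∀ a, AuxRep Θ (β a) (ρ a)) ∧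
      (∀ a b, ρ (a * b) = ρ a ∘L ρ b) ∧ ∀ a, adjoint (ρ a) = ρ (star a) := by
  have hex : ∀ a, ∃ R, AuxRep Θ (β a) R := by
    intro a
    obtain ⟨d, hd, hds, hdd⟩ := auxMul_defect 𝒰 h (adjoint (a : L →L[ℂ] L)) (by
      rw [adjoint_adjoint]
      exact (star a * a).2)
    rw [adjoint_adjoint] at hdd
    have hd' : star (⟨d, hd⟩ : auxMul 𝒰) = ⟨d, hd⟩ := Subtype.ext hds
    refine aux_rep_exists (hβ a) (hβ ⟨d, hd⟩) ‖adjoint (a : L →L[ℂ] L)‖ fun y => ?_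
    have h1 : star a * a + ⟨d, hd⟩ * ⟨d, hd⟩
        = ((‖adjoint (a : L →L[ℂ] L)‖ : ℂ) ^ 2) • (1 : auxMul 𝒰) := Subtype.ext hdd
    have h2 := congrArg (fun T => β T y) h1
    rw [hd']
    simp only [map_add, map_mul, map_smul, map_one] at h2
    exact h2
  choose R hR using hex
  refine ⟨{ toFun := R, map_add' := fun a b => ?_, map_smul' := fun c a => ?_ }, hR,
    fun a b => ?_, fun a => ?_⟩
  · have := hR (a + b)
    rw [map_add] at this
    exact this.uniq ((hR a).add (hR b))
  · have := hR (c • a)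
    rw [map_smul] at this
    exact this.uniq ((hR a).smul c)
  · have := hR (a * b)
    rw [map_mul] at this
    exact this.uniq ((hR a).comp (hR b))
  · exact (hR a).adj (hR _) (hβ a)

/-- The evaluation map. -/
noncomputable def auxΘ {X H L : Type*} [AddCommGroup X] [Module ℂ X]
    [NormedAddCommGroup H] [InnerProductSpace ℂ H]
    [NormedAddCommGroup L] [InnerProductSpace ℂ L]
    (θ : X →ₗ[ℂ] (H →L[ℂ] L)) : X ⊗[ℂ] H →ₗ[ℂ] L :=
  TensorProduct.lift ((ContinuousLinearMap.coeLM ℂ) ∘ₗ θ)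

theorem auxΘ_tmul {X H L : Type*} [AddCommGroup X] [Module ℂ X]
    [NormedAddCommGroup H] [InnerProductSpace ℂ H]
    [NormedAddCommGroup L] [InnerProductSpace ℂ L]
    (θ : X →ₗ[ℂ] (H →L[ℂ] L)) (x : X) (h : H) : auxΘ θ (x ⊗ₜ h) = θ x h := rfl

theorem aux_adj {X H L : Type*} [AddCommGroup X] [Module ℂ X]
    [NormedAddCommGroup H] [InnerProductSpace ℂ H] [CompleteSpace H]
    [NormedAddCommGroup L] [InnerProductSpace ℂ L] [CompleteSpace L]
    (θ : X →ₗ[ℂ] (H →L[ℂ] L)) (S S' : X →ₗ[ℂ] X)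
    (hS : ∀ x y z, θ z ∘L adjoint (θ x) ∘L θ (S y) = θ z ∘L adjoint (θ (S' x)) ∘L θ y) :
    AuxAdj (auxΘ θ) (S.rTensor H) (S'.rTensor H) := by
  have key : ∀ x y h, adjoint (θ x) (θ (S y) h) = adjoint (θ (S' x)) (θ y h) := by
    intro x y h
    set δ := adjoint (θ x) (θ (S y) h) - adjoint (θ (S' x)) (θ y h) with hδ
    have h0 : ∀ z, θ z δ = 0 := by
      intro z
      have := congrArg (fun f => f h) (hS x y z)
      simp only [comp_apply] at this
      rw [hδ, map_sub, this, sub_self]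
    have h1 : ⟪δ, δ⟫_ℂ = 0 := by
      conv_lhs => rw [hδ, inner_sub_left, adjoint_inner_left, adjoint_inner_left]
      rw [← hδ, h0, h0]
      simp
    exact sub_eq_zero.mp (inner_self_eq_zero.mp h1)
  intro y z
  induction y using TensorProduct.induction_on with
  | zero => simp
  | add a b ha hb => simp only [map_add, inner_add_left, ha, hb]
  | tmul x h =>
    induction z using TensorProduct.induction_on with
    | zero => simp
    | add a b ha hb => simp only [map_add, inner_add_right, ha, hb]
    | tmul x' h' =>
      rw [LinearMap.rTensor_tmul, LinearMap.rTensor_tmul]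
      simp only [auxΘ_tmul]
      rw [← adjoint_inner_right, key, adjoint_inner_right]

theorem aux_pure {P Q H L : Type*} [AddCommGroup P] [Module ℂ P] [AddCommGroup Q] [Module ℂ Q]
    [NormedAddCommGroup H] [InnerProductSpace ℂ H] [CompleteSpace H]
    [NormedAddCommGroup L] [InnerProductSpace ℂ L] [CompleteSpace L]
    (θ : P ⊗[ℂ] Q →ₗ[ℂ] (H →L[ℂ] L)) (S S' : P ⊗[ℂ] Q →ₗ[ℂ] P ⊗[ℂ] Q)
    (hS : ∀ (p₁ p₂ p₃ : P) (q₁ q₂ q₃ : Q),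
      θ (p₁ ⊗ₜ q₁) ∘L adjoint (θ (p₂ ⊗ₜ q₂)) ∘L θ (S (p₃ ⊗ₜ q₃))
       = θ (p₁ ⊗ₜ q₁) ∘L adjoint (θ (S' (p₂ ⊗ₜ q₂))) ∘L θ (p₃ ⊗ₜ q₃)) :
    ∀ x y z, θ z ∘L adjoint (θ x) ∘L θ (S y) = θ z ∘L adjoint (θ (S' x)) ∘L θ y := by
  have adj_add : ∀ a b : H →L[ℂ] L, adjoint (a + b) = adjoint a + adjoint b :=
    fun a b => map_add adjoint a b
  have adj_zero : adjoint (0 : H →L[ℂ] L) = 0 := map_zero adjoint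
  intro x y z
  induction x using TensorProduct.induction_on with
  | zero => simp only [map_zero θ, map_zero S', adj_zero, zero_comp, comp_zero]
  | add a b ha hb => simp only [map_add θ, map_add S', adj_add, add_comp, comp_add, ha, hb]
  | tmul p q =>
    induction y using TensorProduct.induction_on with
    | zero => simp only [map_zero θ, map_zero S, zero_comp, comp_zero]
    | add a b ha hb => simp only [map_add θ, map_add S, add_comp, comp_add, ha, hb]
    | tmul p' q' =>
      induction z using TensorProduct.induction_on with
      | zero => simp only [map_zero θ, zero_comp, comp_zero]
      | add a b ha hb => simp only [map_add θ, add_comp, comp_add, ha, hb]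
      | tmul p'' q'' => exact hS _ _ _ _ _ _

end aux3

section aux4

/-- Right tensoring as an algebra homomorphism. -/
noncomputable def auxRT (M N : Type*) [AddCommGroup M] [Module ℂ M] [AddCommGroup N] [Module ℂ N] :
    Module.End ℂ M →ₐ[ℂ] Module.End ℂ (M ⊗[ℂ] N) :=
  AlgHom.ofLinearMap (LinearMap.rTensorHom N) (LinearMap.rTensor_id N M)
    (fun f g => LinearMap.rTensor_mul N f g)

/-- Left tensoring as an algebra homomorphism. -/
noncomputable def auxLT (M N : Type*) [AddCommGroup M] [Module ℂ M] [AddCommGroup N] [Module ℂ N] :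
    Module.End ℂ N →ₐ[ℂ] Module.End ℂ (M ⊗[ℂ] N) :=
  AlgHom.ofLinearMap (LinearMap.lTensorHom M) (LinearMap.lTensor_id M N)
    (fun f g => LinearMap.lTensor_mul M f g)

theorem auxRT_apply {M N : Type*} [AddCommGroup M] [Module ℂ M] [AddCommGroup N] [Module ℂ N]
    (f : Module.End ℂ M) : auxRT M N f = f.rTensor N := rfl

theorem auxLT_apply {M N : Type*} [AddCommGroup M] [Module ℂ M] [AddCommGroup N] [Module ℂ N]
    (f : Module.End ℂ N) : auxLT M N f = f.lTensor M := rfl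

/-- Pair multiplier. -/
noncomputable def auxPair {K L : Type*}
    [NormedAddCommGroup K] [InnerProductSpace ℂ K] [CompleteSpace K]
    [NormedAddCommGroup L] [InnerProductSpace ℂ L] [CompleteSpace L]
    (𝒰 : Submodule ℂ (K →L[ℂ] L))
    (htro : ∀ S ∈ 𝒰, ∀ T ∈ 𝒰, ∀ R ∈ 𝒰, S ∘L (adjoint T) ∘L R ∈ 𝒰)
    (u u' : 𝒰) : auxMul 𝒰 :=
  ⟨(u : K →L[ℂ] L) ∘L adjoint (u' : K →L[ℂ] L), auxMul_pair 𝒰 htro u.2 u'.2⟩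

variable {K₁ L₁ H₂ K₂ H L : Type*}
    [NormedAddCommGroup K₁] [InnerProductSpace ℂ K₁] [CompleteSpace K₁]
    [NormedAddCommGroup L₁] [InnerProductSpace ℂ L₁] [CompleteSpace L₁]
    [NormedAddCommGroup H₂] [InnerProductSpace ℂ H₂] [CompleteSpace H₂]
    [NormedAddCommGroup K₂] [InnerProductSpace ℂ K₂] [CompleteSpace K₂]
    [NormedAddCommGroup H] [InnerProductSpace ℂ H] [CompleteSpace H]
    [NormedAddCommGroup L] [InnerProductSpace ℂ L] [CompleteSpace L]

theorem aux_reps_X {K' L' X : Type*}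
    [NormedAddCommGroup K'] [InnerProductSpace ℂ K'] [CompleteSpace K']
    [NormedAddCommGroup L'] [InnerProductSpace ℂ L'] [CompleteSpace L']
    [AddCommGroup X] [Module ℂ X]
    (𝒰 : Submodule ℂ (K' →L[ℂ] L')) (h : IsClosed (𝒰 : Set (K' →L[ℂ] L')))
    (θ : X →ₗ[ℂ] (H →L[ℂ] L)) (α : auxMul 𝒰 →ₐ[ℂ] Module.End ℂ X)
    (hα : ∀ a x y z, θ z ∘L adjoint (θ x) ∘L θ (α a y)
      = θ z ∘L adjoint (θ (α (star a) x)) ∘L θ y) :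
    ∃ ρ : auxMul 𝒰 →ₗ[ℂ] (L →L[ℂ] L),
      (∀ a b, ρ (a * b) = ρ a ∘L ρ b) ∧ (∀ a, adjoint (ρ a) = ρ (star a)) ∧
      (∀ a x, ρ a ∘L θ x = θ (α a x)) ∧
      ∀ a z, (∀ x h, ⟪θ x h, z⟫_ℂ = 0) → ρ a z = 0 := by
  obtain ⟨ρ, hρ, hρm, hρs⟩ := aux_repr 𝒰 h (auxΘ θ) ((auxRT X H).comp α)
    (fun a => aux_adj θ (α a) (α (star a)) (hα a))
  refine ⟨ρ, hρm, hρs, fun a x => ?_, fun a z hz => ?_⟩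
  · ext1 h
    exact (hρ a).1 (x ⊗ₜ h)
  · refine (hρ a).2 z fun y => ?_
    induction y using TensorProduct.induction_on with
    | zero => simp
    | add a b ha hb => simp only [map_add, inner_add_left, ha, hb, add_zero]
    | tmul x h => exact hz x h

theorem aux_uniq_X {X : Type*} [AddCommGroup X] [Module ℂ X]
    (θ : X →ₗ[ℂ] (H →L[ℂ] L)) {R S : L →L[ℂ] L} (h1 : ∀ x, R ∘L θ x = S ∘L θ x)
    (hR : ∀ z, (∀ x h, ⟪θ x h, z⟫_ℂ = 0) → R z = 0)
    (hS : ∀ z, (∀ x h, ⟪θ x h, z⟫_ℂ = 0) → S z = 0) : R = S := by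
  refine sub_eq_zero.mp (aux_zero (auxΘ θ) (R - S) (fun y => ?_) (fun z hz => ?_))
  · induction y using TensorProduct.induction_on with
    | zero => simp
    | add a b ha hb => simp only [map_add, ha, hb, add_zero]
    | tmul x h =>
      have := congrArg (fun f => f h) (h1 x)
      simp only [comp_apply] at this
      rw [auxΘ_tmul, sub_apply, this, sub_self]
  · have hz' : ∀ x h, ⟪θ x h, z⟫_ℂ = 0 := fun x h => hz (x ⊗ₜ h)
    rw [sub_apply, hR z hz', hS z hz', sub_zero]

theorem aux_all_gen {P Q : Type*} [AddCommGroup P] [Module ℂ P] [AddCommGroup Q] [Module ℂ Q]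
    (𝒰 : Submodule ℂ (K₁ →L[ℂ] L₁)) (𝒱 : Submodule ℂ (H₂ →L[ℂ] K₂))
    (h𝒰closed : IsClosed (𝒰 : Set (K₁ →L[ℂ] L₁)))
    (h𝒱closed : IsClosed (𝒱 : Set (H₂ →L[ℂ] K₂)))
    (αU : auxMul 𝒰 →ₐ[ℂ] Module.End ℂ P) (αV : auxMul 𝒱 →ₐ[ℂ] Module.End ℂ Q)
    (pU : P → P → auxMul 𝒰) (pV : Q → Q → auxMul 𝒱)
    (θ : (P ⊗[ℂ] Q) →ₗ[ℂ] (H →L[ℂ] L))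
    (hθ : ∀ (u₁ u₂ u₃ : P) (v₁ v₂ v₃ : Q),
      θ (αU (pU u₁ u₂) u₃ ⊗ₜ[ℂ] αV (pV v₁ v₂) v₃)
        = θ (u₁ ⊗ₜ[ℂ] v₁) ∘L adjoint (θ (u₂ ⊗ₜ[ℂ] v₂)) ∘L θ (u₃ ⊗ₜ[ℂ] v₃))
    (hswapU : ∀ (a : auxMul 𝒰) (u u' u'' : P),
      αU (pU u u') (αU a u'') = αU (pU u (αU (star a) u')) u'')
    (hswapV : ∀ (a : auxMul 𝒱) (u u' u'' : Q),
      αV (pV u u') (αV a u'') = αV (pV u (αV (star a) u')) u'') :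
    ∃ (ρ : auxMul 𝒰 →ₗ[ℂ] (L →L[ℂ] L)) (σ : auxMul 𝒱 →ₗ[ℂ] (L →L[ℂ] L)),
      (∀ a b, ρ (a * b) = ρ a ∘L ρ b) ∧ (∀ a, adjoint (ρ a) = ρ (star a)) ∧
      (∀ a b, σ (a * b) = σ a ∘L σ b) ∧ (∀ a, adjoint (σ a) = σ (star a)) ∧
      (∀ a b, ρ a ∘L σ b = σ b ∘L ρ a) ∧ (∀ a, ρ a ∘L σ 1 = ρ a) ∧
      (∀ b u v, σ b ∘L θ (u ⊗ₜ v) = θ (u ⊗ₜ αV b v)) ∧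
      (∀ u u' v v', θ (u ⊗ₜ v) ∘L adjoint (θ (u' ⊗ₜ v'))
        = ρ (pU u u') ∘L σ (pV v v')) := by
  obtain ⟨ρ, hρm, hρs, hρθ, hρ0⟩ := aux_reps_X 𝒰 h𝒰closed θ ((auxRT P Q).comp (αU))
    (fun a => aux_pure θ ((auxRT P Q) (αU a)) ((auxRT P Q) (αU (star a)))
      fun p₁ p₂ p₃ q₁ q₂ q₃ => by
        rw [auxRT_apply, auxRT_apply, LinearMap.rTensor_tmul, LinearMap.rTensor_tmul, ← hθ, ← hθ, hswapU])
  obtain ⟨σ, hσm, hσs, hσθ, hσ0⟩ := aux_reps_X 𝒱 h𝒱closed θ ((auxLT P Q).comp (αV))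
    (fun a => aux_pure θ ((auxLT P Q) (αV a)) ((auxLT P Q) (αV (star a)))
      fun p₁ p₂ p₃ q₁ q₂ q₃ => by
        rw [auxLT_apply, auxLT_apply, LinearMap.lTensor_tmul, LinearMap.lTensor_tmul, ← hθ, ← hθ, hswapV])
  have hρt : ∀ a u v, ρ a ∘L θ (u ⊗ₜ v) = θ (αU a u ⊗ₜ v) := fun a u v => hρθ a _
  have hσt : ∀ a u v, σ a ∘L θ (u ⊗ₜ v) = θ (u ⊗ₜ αV a v) := fun a u v => hσθ a _
  have uniq : ∀ R S : L →L[ℂ] L, (∀ u v, R ∘L θ (u ⊗ₜ v) = S ∘L θ (u ⊗ₜ v)) →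
      (∀ z, (∀ x h, ⟪θ x h, z⟫_ℂ = 0) → R z = 0) →
      (∀ z, (∀ x h, ⟪θ x h, z⟫_ℂ = 0) → S z = 0) → R = S := by
    intro R S h1 hR hS
    refine aux_uniq_X θ (fun x => ?_) hR hS
    induction x using TensorProduct.induction_on with
    | zero => simp only [map_zero θ, comp_zero]
    | add a b ha hb => simp only [map_add θ, comp_add, ha, hb]
    | tmul u v => exact h1 u v
  refine ⟨ρ, σ, hρm, hρs, hσm, hσs, fun a b => ?_, fun a => ?_, hσt, fun u u' v v' => ?_⟩
  · refine uniq _ _ (fun u v => ?_) (fun z hz => ?_) (fun z hz => ?_)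
    · rw [comp_assoc, hσt, hρt, comp_assoc, hρt, hσt]
    · rw [comp_apply, hσ0 b z hz, map_zero]
    · rw [comp_apply, hρ0 a z hz, map_zero]
  · refine uniq _ _ (fun u v => ?_) (fun z hz => ?_) (hρ0 a)
    · rw [comp_assoc, hσt, map_one]
      rfl
    · rw [comp_apply, hσ0 1 z hz, map_zero]
  · refine uniq _ _ (fun u'' v'' => ?_) (fun z hz => ?_) (fun z hz => ?_)
    · rw [comp_assoc, comp_assoc, hσt, hρt, hθ]
    · have : adjoint (θ (u' ⊗ₜ v')) z = 0 := by
        refine ext_inner_left ℂ fun h => ?_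
        rw [adjoint_inner_right, inner_zero_right]
        exact hz (u' ⊗ₜ v') h
      rw [comp_apply, this, map_zero]
    · rw [comp_apply, hσ0 _ z hz, map_zero]

theorem aux_all_reps
    (𝒰 : Submodule ℂ (K₁ →L[ℂ] L₁)) (𝒱 : Submodule ℂ (H₂ →L[ℂ] K₂))
    (h𝒰closed : IsClosed (𝒰 : Set (K₁ →L[ℂ] L₁)))
    (h𝒱closed : IsClosed (𝒱 : Set (H₂ →L[ℂ] K₂)))
    (h𝒰tro : ∀ S ∈ 𝒰, ∀ T ∈ 𝒰, ∀ R ∈ 𝒰, S ∘L (adjoint T) ∘L R ∈ 𝒰)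
    (h𝒱tro : ∀ S ∈ 𝒱, ∀ T ∈ 𝒱, ∀ R ∈ 𝒱, S ∘L (adjoint T) ∘L R ∈ 𝒱)
    (θ : (↥𝒰 ⊗[ℂ] ↥𝒱) →ₗ[ℂ] (H →L[ℂ] L))
    (hθ : ∀ (u₁ u₂ u₃ : 𝒰) (v₁ v₂ v₃ : 𝒱),
      θ (auxLmHom 𝒰 (auxPair 𝒰 h𝒰tro u₁ u₂) u₃ ⊗ₜ[ℂ] auxLmHom 𝒱 (auxPair 𝒱 h𝒱tro v₁ v₂) v₃)
        = θ (u₁ ⊗ₜ[ℂ] v₁) ∘L adjoint (θ (u₂ ⊗ₜ[ℂ] v₂)) ∘L θ (u₃ ⊗ₜ[ℂ] v₃)) :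
    ∃ (ρ : auxMul 𝒰 →ₗ[ℂ] (L →L[ℂ] L)) (σ : auxMul 𝒱 →ₗ[ℂ] (L →L[ℂ] L)),
      (∀ a b, ρ (a * b) = ρ a ∘L ρ b) ∧ (∀ a, adjoint (ρ a) = ρ (star a)) ∧
      (∀ a b, σ (a * b) = σ a ∘L σ b) ∧ (∀ a, adjoint (σ a) = σ (star a)) ∧
      (∀ a b, ρ a ∘L σ b = σ b ∘L ρ a) ∧ (∀ a, ρ a ∘L σ 1 = ρ a) ∧
      (∀ b u v, σ b ∘L θ (u ⊗ₜ v) = θ (u ⊗ₜ auxLmHom 𝒱 b v)) ∧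
      (∀ u u' v v', θ (u ⊗ₜ v) ∘L adjoint (θ (u' ⊗ₜ v'))
        = ρ (auxPair 𝒰 h𝒰tro u u') ∘L σ (auxPair 𝒱 h𝒱tro v v')) := by
  have hswapU : ∀ (a : auxMul 𝒰) (u u' u'' : 𝒰),
      auxLmHom 𝒰 (auxPair 𝒰 h𝒰tro u u') (auxLmHom 𝒰 a u'')
        = auxLmHom 𝒰 (auxPair 𝒰 h𝒰tro u (auxLmHom 𝒰 (star a) u')) u'' := by
    intro a u u' u''
    ext1
    simp only [auxLmHom_coe, auxPair, adjoint_comp, StarMemClass.coe_star, star_eq_adjoint,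
      adjoint_adjoint, comp_assoc]
  have hswapV : ∀ (a : auxMul 𝒱) (u u' u'' : 𝒱),
      auxLmHom 𝒱 (auxPair 𝒱 h𝒱tro u u') (auxLmHom 𝒱 a u'')
        = auxLmHom 𝒱 (auxPair 𝒱 h𝒱tro u (auxLmHom 𝒱 (star a) u')) u'' := by
    intro a u u' u''
    ext1
    simp only [auxLmHom_coe, auxPair, adjoint_comp, StarMemClass.coe_star, star_eq_adjoint,
      adjoint_adjoint, comp_assoc]
  exact aux_all_gen 𝒰 𝒱 h𝒰closed h𝒱closed (auxLmHom 𝒰) (auxLmHom 𝒱) (auxPair 𝒰 h𝒰tro)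
    (auxPair 𝒱 h𝒱tro) θ hθ hswapU hswapV

end aux4

section aux5

theorem aux_final {P Q H L : Type u} [AddCommGroup P] [Module ℂ P] [AddCommGroup Q] [Module ℂ Q]
    [NormedAddCommGroup H] [InnerProductSpace ℂ H] [CompleteSpace H]
    [NormedAddCommGroup L] [InnerProductSpace ℂ L] [CompleteSpace L]
    (θ : P → Q → (H →L[ℂ] L)) (G : P → P → (L →L[ℂ] L)) (S : Q → Q → (L →L[ℂ] L))
    (mP : P → P → P → P) (mQ : Q → Q → Q → Q)
    (Gadd : ∀ x y z, G x (y + z) = G x y + G x z)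
    (Gsmul : ∀ x (c : ℂ) y, G x (c • y) = (starRingEnd ℂ c) • G x y)
    (Gstar : ∀ x y, adjoint (G x y) = G y x)
    (Gpos : ∀ (vv : P →₀ L),
      0 ≤ RCLike.re (vv.sum fun x w ↦ vv.sum fun x' w' ↦ ⟪G x' x w, w'⟫_ℂ))
    (Gmul : ∀ x u₁ u₂ u₃, G x u₃ ∘L G u₂ u₁ = G x (mP u₁ u₂ u₃))
    (Sstar : ∀ x y, adjoint (S x y) = S y x)
    (comm : ∀ x y v w, G x y ∘L S v w = S v w ∘L G x y)
    (hS : ∀ v₁ v₂ v₃ u, S v₁ v₂ ∘L θ u v₃ = θ u (mQ v₁ v₂ v₃))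
    (hθθ : ∀ u v u' v', θ u v ∘L adjoint (θ u' v') = G u u' ∘L S v v')
    (θadd : ∀ u v w, θ u (v + w) = θ u v + θ u w)
    (θsmul : ∀ u (c : ℂ) v, θ u (c • v) = c • θ u v)
    (defect : ∀ v, ∃ (C : ℝ) (D : L →L[ℂ] L), 0 ≤ C ∧ adjoint D = D ∧
      (∀ x y, G x y ∘L D = D ∘L G x y) ∧
      ∀ x y, G x y ∘L S v v + G x y ∘L D ∘L D = ((C : ℂ) ^ 2) • G x y) :
    ∃ (𝕂 : HilbertC.{u})
      (φ : P →ₗ[ℂ] (𝕂.carrier →L[ℂ] L)) (ψ : Q →ₗ[ℂ] (H →L[ℂ] 𝕂.carrier)),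
      (∀ s t r, φ (mP s t r) = φ s ∘L adjoint (φ t) ∘L φ r) ∧
      (∀ s t r, ψ (mQ s t r) = ψ s ∘L adjoint (ψ t) ∘L ψ r) ∧
      (∀ u₁ u₂ v₁ v₂,
        Commute ((adjoint (φ u₁)) ∘L (φ u₂)) ((ψ v₁) ∘L (adjoint (ψ v₂)))) ∧
      (∀ u v, θ u v = (φ u) ∘L (ψ v)) := by
  obtain ⟨⟨𝕂⟩, Γ, hΓ, hd⟩ := aux_kernel_dil (fun x y => G x y)
    (by
      ext1 x y
      exact Gstar y x) Gpos
  refine ⟨⟨𝕂⟩, ?_⟩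
  change P → L →L[ℂ] 𝕂 at Γ
  have hG : ∀ x y l l', ⟪Γ x l, Γ y l'⟫_ℂ = ⟪l, G x y l'⟫_ℂ := by
    intro x y l l'
    rw [← adjoint_inner_right, ← hΓ x y]
    rfl
  have ext1' : ∀ k k' : 𝕂, (∀ x l, ⟪Γ x l, k⟫_ℂ = ⟪Γ x l, k'⟫_ℂ) → k = k' := by
    intro k k' h
    refine sub_eq_zero.mp (hd _ fun x l => ?_)
    rw [inner_sub_right]
    exact sub_eq_zero.mpr (h x l)
  have extE : ∀ {E : Type u} [NormedAddCommGroup E] [InnerProductSpace ℂ E] [CompleteSpace E]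
      (R T : 𝕂 →L[ℂ] E), (∀ x l, R (Γ x l) = T (Γ x l)) → R = T := by
    intro E _ _ _ R T h
    have : adjoint R = adjoint T := by
      ext1 z
      refine ext1' _ _ fun x l => ?_
      rw [adjoint_inner_right, adjoint_inner_right, h]
    rw [← adjoint_adjoint R, this, adjoint_adjoint]
  have Γadd : ∀ x y, Γ (x + y) = Γ x + Γ y := by
    intro x y
    ext1 l
    refine ext1' _ _ fun z l' => ?_
    rw [hG, Gadd, add_apply, add_apply, inner_add_right, inner_add_right, hG, hG]
  have Γsmul : ∀ (c : ℂ) y, Γ (c • y) = (starRingEnd ℂ c) • Γ y := by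
    intro c y
    ext1 l
    refine ext1' _ _ fun z l' => ?_
    rw [hG, Gsmul, smul_apply, smul_apply, inner_smul_right, inner_smul_right, hG]
  have adj_addL : ∀ a b : L →L[ℂ] 𝕂, adjoint (a + b) = adjoint a + adjoint b :=
    fun a b => map_add adjoint a b
  have adj_smulL : ∀ (c : ℂ) (a : L →L[ℂ] 𝕂),
      adjoint (c • a) = (starRingEnd ℂ c) • adjoint a := fun c a => map_smulₛₗ adjoint c a
  have adj_addH : ∀ a b : 𝕂 →L[ℂ] H, adjoint (a + b) = adjoint a + adjoint b :=
    fun a b => map_add adjoint a b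
  have adj_smulH : ∀ (c : ℂ) (a : 𝕂 →L[ℂ] H),
      adjoint (c • a) = (starRingEnd ℂ c) • adjoint a := fun c a => map_smulₛₗ adjoint c a
  have adj_addθ : ∀ a b : H →L[ℂ] L, adjoint (a + b) = adjoint a + adjoint b :=
    fun a b => map_add adjoint a b
  have adj_smulθ : ∀ (c : ℂ) (a : H →L[ℂ] L),
      adjoint (c • a) = (starRingEnd ℂ c) • adjoint a := fun c a => map_smulₛₗ adjoint c a
  have exΨ : ∀ v, ∃ R : 𝕂 →L[ℂ] H, ∀ x l, R (Γ x l) = adjoint (θ x v) l := by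
    intro v
    obtain ⟨C, D, hC, hDs, hDG, hCD⟩ := defect v
    obtain ⟨R, hR, -⟩ := aux_ext (Finsupp.lsum ℂ (fun x => (Γ x).toLinearMap))
      (Finsupp.lsum ℂ (fun x => (adjoint (θ x v)).toLinearMap)) C (by
        intro κ
        have e1 : ∀ x y, ⟪adjoint (θ x v) (κ x), adjoint (θ y v) (κ y)⟫_ℂ
            + ⟪Γ x (D (κ x)), Γ y (D (κ y))⟫_ℂ = (C : ℂ) ^ 2 * ⟪Γ x (κ x), Γ y (κ y)⟫_ℂ := by
          intro x y
          have h1 := congrArg (fun f => f (κ y)) (hθθ x v y v)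
          have h2 := congrArg (fun f => f (κ y)) (hCD x y)
          have h3 := congrArg (fun f => f (D (κ y))) (hDG x y)
          simp only [comp_apply, add_apply, smul_apply] at h1 h2 h3
          rw [adjoint_inner_left, h1, hG, hG]
          nth_rewrite 1 [← hDs]
          rw [adjoint_inner_left, ← h3, ← inner_add_right, h2, inner_smul_right]
        simp only [Finsupp.lsum_apply, Finsupp.sum, ContinuousLinearMap.coe_coe]
        set a := ∑ x ∈ κ.support, adjoint (θ x v) (κ x) with ha
        set b := ∑ x ∈ κ.support, Γ x (D (κ x)) with hb
        set c := ∑ x ∈ κ.support, Γ x (κ x) with hc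
        have e2 : ⟪a, a⟫_ℂ + ⟪b, b⟫_ℂ = (C : ℂ) ^ 2 * ⟪c, c⟫_ℂ := by
          simp only [ha, hb, hc, sum_inner, inner_sum]
          rw [Finset.mul_sum, ← Finset.sum_add_distrib]
          refine Finset.sum_congr rfl fun x _ => ?_
          rw [Finset.mul_sum, ← Finset.sum_add_distrib]
          exact Finset.sum_congr rfl fun y _ => e1 _ _
        have na : ⟪a, a⟫_ℂ = ((‖a‖ ^ 2 : ℝ) : ℂ) := by
          rw [inner_self_eq_norm_sq_to_K, Complex.ofReal_pow]
          rfl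
        have nb : ⟪b, b⟫_ℂ = ((‖b‖ ^ 2 : ℝ) : ℂ) := by
          rw [inner_self_eq_norm_sq_to_K, Complex.ofReal_pow]
          rfl
        have nc : ⟪c, c⟫_ℂ = ((‖c‖ ^ 2 : ℝ) : ℂ) := by
          rw [inner_self_eq_norm_sq_to_K, Complex.ofReal_pow]
          rfl
        rw [na, nb, nc] at e2
        have e3 : ‖a‖ ^ 2 + ‖b‖ ^ 2 = C ^ 2 * ‖c‖ ^ 2 := by exact_mod_cast e2
        refine le_of_sq_le_sq ?_ (by positivity)
        nlinarith [sq_nonneg ‖b‖])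
    refine ⟨R, fun x l => ?_⟩
    have := hR (Finsupp.single x l)
    simpa using this
  choose Ψ hΨ using exΨ
  have Ψadd : ∀ v w, Ψ (v + w) = Ψ v + Ψ w := by
    intro v w
    refine extE _ _ fun x l => ?_
    rw [add_apply, hΨ, hΨ, hΨ, θadd, adj_addθ, add_apply]
  have Ψsmul : ∀ (c : ℂ) w, Ψ (c • w) = (starRingEnd ℂ c) • Ψ w := by
    intro c w
    refine extE _ _ fun x l => ?_
    rw [smul_apply, hΨ, hΨ, θsmul, adj_smulθ, smul_apply]
  have hφ : ∀ u x l, adjoint (Γ u) (Γ x l) = G u x l := by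
    intro u x l
    rw [← hΓ u x]
    rfl
  have hΨΓ : ∀ u v, Ψ v ∘L Γ u = adjoint (θ u v) := by
    intro u v
    ext1 l
    exact hΨ v u l
  have hψψ : ∀ v₂ v₁ u l, adjoint (Ψ v₂) (Ψ v₁ (Γ u l)) = Γ u (S v₂ v₁ l) := by
    intro v₂ v₁ u l
    refine ext1' _ _ fun x l' => ?_
    have h1 := congrArg (fun f => f l) (hθθ x v₂ u v₁)
    simp only [comp_apply] at h1
    rw [adjoint_inner_right, hΨ, hΨ, adjoint_inner_left, h1, hG]
  have Γter : ∀ u₁ u₂ u₃ l, Γ u₃ (G u₂ u₁ l) = Γ (mP u₁ u₂ u₃) l := by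
    intro u₁ u₂ u₃ l
    refine ext1' _ _ fun x l' => ?_
    rw [hG, hG, ← Gmul, comp_apply]
  refine ⟨{ toFun := fun u => adjoint (Γ u), map_add' := ?_, map_smul' := ?_ },
    { toFun := fun v => adjoint (Ψ v), map_add' := ?_, map_smul' := ?_ }, ?_, ?_, ?_, ?_⟩
  · intro x y
    rw [Γadd, adj_addL]
  · intro c y
    rw [Γsmul, adj_smulL, Complex.conj_conj]
    rfl
  · intro x y
    rw [Ψadd, adj_addH]
  · intro c y
    rw [Ψsmul, adj_smulH, Complex.conj_conj]
    rfl
  · intro s t r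
    change adjoint (Γ (mP s t r)) = adjoint (Γ s) ∘L adjoint (adjoint (Γ t)) ∘L adjoint (Γ r)
    have : Γ (mP s t r) = Γ r ∘L adjoint (Γ t) ∘L Γ s := by
      ext1 l
      rw [← Γter, comp_apply, comp_apply, hφ]
    rw [this, adjoint_comp, adjoint_comp, comp_assoc]
  · intro s t r
    change adjoint (Ψ (mQ s t r)) = adjoint (Ψ s) ∘L adjoint (adjoint (Ψ t)) ∘L adjoint (Ψ r)
    have : Ψ (mQ s t r) = Ψ r ∘L adjoint (Ψ t) ∘L Ψ s := by
      refine extE _ _ fun u l => ?_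
      rw [comp_apply, comp_apply, hψψ, hΨ, hΨ, ← hS, adjoint_comp, Sstar, comp_apply]
    rw [this, adjoint_comp, adjoint_comp, comp_assoc]
  · intro u₁ u₂ v₁ v₂
    change (adjoint (adjoint (Γ u₁)) ∘L adjoint (Γ u₂)) ∘L (adjoint (Ψ v₁) ∘L adjoint (adjoint (Ψ v₂)))
      = (adjoint (Ψ v₁) ∘L adjoint (adjoint (Ψ v₂))) ∘L (adjoint (adjoint (Γ u₁)) ∘L adjoint (Γ u₂))
    rw [adjoint_adjoint, adjoint_adjoint]
    refine extE _ _ fun u l => ?_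
    have h1 := congrArg (fun f => f l) (comm u₂ u v₁ v₂)
    simp only [comp_apply] at h1 ⊢
    rw [hψψ, hφ, hφ, hψψ, h1]
  · intro u v
    change θ u v = adjoint (Γ u) ∘L adjoint (Ψ v)
    rw [← adjoint_comp, hΨΓ, adjoint_adjoint]

end aux5

section aux6

theorem auxPair_add {K L : Type*}
    [NormedAddCommGroup K] [InnerProductSpace ℂ K] [CompleteSpace K]
    [NormedAddCommGroup L] [InnerProductSpace ℂ L] [CompleteSpace L]
    (𝒰 : Submodule ℂ (K →L[ℂ] L))
    (htro : ∀ S ∈ 𝒰, ∀ T ∈ 𝒰, ∀ R ∈ 𝒰, S ∘L (adjoint T) ∘L R ∈ 𝒰)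
    (x y z : 𝒰) : auxPair 𝒰 htro x (y + z) = auxPair 𝒰 htro x y + auxPair 𝒰 htro x z := by
  ext1
  change (x : K →L[ℂ] L) ∘L adjoint ((y : K →L[ℂ] L) + (z : K →L[ℂ] L)) =
    (x : K →L[ℂ] L) ∘L adjoint (y : K →L[ℂ] L) + (x : K →L[ℂ] L) ∘L adjoint (z : K →L[ℂ] L)
  have adj_add : ∀ a b : K →L[ℂ] L, adjoint (a + b) = adjoint a + adjoint b :=
    fun a b => map_add adjoint a b
  rw [adj_add, comp_add]

theorem auxPair_smul {K L : Type*}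
    [NormedAddCommGroup K] [InnerProductSpace ℂ K] [CompleteSpace K]
    [NormedAddCommGroup L] [InnerProductSpace ℂ L] [CompleteSpace L]
    (𝒰 : Submodule ℂ (K →L[ℂ] L))
    (htro : ∀ S ∈ 𝒰, ∀ T ∈ 𝒰, ∀ R ∈ 𝒰, S ∘L (adjoint T) ∘L R ∈ 𝒰)
    (x : 𝒰) (c : ℂ) (y : 𝒰) :
    auxPair 𝒰 htro x (c • y) = (starRingEnd ℂ c) • auxPair 𝒰 htro x y := by
  ext1
  change (x : K →L[ℂ] L) ∘L adjoint (c • (y : K →L[ℂ] L)) =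
    (starRingEnd ℂ c) • ((x : K →L[ℂ] L) ∘L adjoint (y : K →L[ℂ] L))
  have adj_smul : ∀ (c : ℂ) (a : K →L[ℂ] L),
      adjoint (c • a) = (starRingEnd ℂ c) • adjoint a := fun c a => map_smulₛₗ adjoint c a
  rw [adj_smul, comp_smul]

theorem auxPair_star {K L : Type*}
    [NormedAddCommGroup K] [InnerProductSpace ℂ K] [CompleteSpace K]
    [NormedAddCommGroup L] [InnerProductSpace ℂ L] [CompleteSpace L]
    (𝒰 : Submodule ℂ (K →L[ℂ] L))
    (htro : ∀ S ∈ 𝒰, ∀ T ∈ 𝒰, ∀ R ∈ 𝒰, S ∘L (adjoint T) ∘L R ∈ 𝒰)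
    (x y : 𝒰) : star (auxPair 𝒰 htro x y) = auxPair 𝒰 htro y x := by
  ext1
  change adjoint ((x : K →L[ℂ] L) ∘L adjoint (y : K →L[ℂ] L)) =
    (y : K →L[ℂ] L) ∘L adjoint (x : K →L[ℂ] L)
  rw [adjoint_comp, adjoint_adjoint]

theorem auxPair_mul {K L : Type*}
    [NormedAddCommGroup K] [InnerProductSpace ℂ K] [CompleteSpace K]
    [NormedAddCommGroup L] [InnerProductSpace ℂ L] [CompleteSpace L]
    (𝒰 : Submodule ℂ (K →L[ℂ] L))
    (htro : ∀ S ∈ 𝒰, ∀ T ∈ 𝒰, ∀ R ∈ 𝒰, S ∘L (adjoint T) ∘L R ∈ 𝒰)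
    (x u₁ u₂ u₃ : 𝒰) : auxPair 𝒰 htro x u₃ * auxPair 𝒰 htro u₂ u₁
      = auxPair 𝒰 htro x (auxLmHom 𝒰 (auxPair 𝒰 htro u₁ u₂) u₃) := by
  ext1
  change ((x : K →L[ℂ] L) ∘L adjoint (u₃ : K →L[ℂ] L)) ∘L
      ((u₂ : K →L[ℂ] L) ∘L adjoint (u₁ : K →L[ℂ] L)) =
    (x : K →L[ℂ] L) ∘L
      adjoint (((u₁ : K →L[ℂ] L) ∘L adjoint (u₂ : K →L[ℂ] L)) ∘L (u₃ : K →L[ℂ] L))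
  simp only [adjoint_comp, adjoint_adjoint, comp_assoc]

theorem aux_pos {K L E : Type*}
    [NormedAddCommGroup K] [InnerProductSpace ℂ K] [CompleteSpace K]
    [NormedAddCommGroup L] [InnerProductSpace ℂ L] [CompleteSpace L]
    [NormedAddCommGroup E] [InnerProductSpace ℂ E] [CompleteSpace E]
    (𝒰 : Submodule ℂ (K →L[ℂ] L)) (h : IsClosed (𝒰 : Set (K →L[ℂ] L)))
    (htro : ∀ S ∈ 𝒰, ∀ T ∈ 𝒰, ∀ R ∈ 𝒰, S ∘L (adjoint T) ∘L R ∈ 𝒰)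
    (ρ : auxMul 𝒰 →ₗ[ℂ] (E →L[ℂ] E))
    (hm : ∀ a b, ρ (a * b) = ρ a ∘L ρ b) (hs : ∀ a, adjoint (ρ a) = ρ (star a))
    (vv : 𝒰 →₀ E) :
    0 ≤ RCLike.re (vv.sum fun x w ↦ vv.sum fun x' w' ↦ ⟪ρ (auxPair 𝒰 htro x' x) w, w'⟫_ℂ) := by
  obtain ⟨c, hc⟩ := auxMul_matrix 𝒰 h htro (n := vv.support) (fun x => (x.1 : K →L[ℂ] L))
    (fun x => x.1.2)
  have hp : ∀ x' x : vv.support, auxPair 𝒰 htro x'.1 x.1 = ∑ k, star (c k x') * c k x := by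
    intro x' x
    ext1
    have := hc x' x
    rw [AddSubmonoidClass.coe_finset_sum]
    exact this.symm
  have hρ : ∀ x' x : vv.support, ∀ w w' : E, ⟪ρ (auxPair 𝒰 htro x'.1 x.1) w, w'⟫_ℂ
      = ∑ k, ⟪ρ (c k x) w, ρ (c k x') w'⟫_ℂ := by
    intro x' x w w'
    rw [hp, map_sum, sum_apply, sum_inner]
    refine Finset.sum_congr rfl fun k _ => ?_
    rw [hm, ← hs, comp_apply, adjoint_inner_left]
  have e : (vv.sum fun x w ↦ vv.sum fun x' w' ↦ ⟪ρ (auxPair 𝒰 htro x' x) w, w'⟫_ℂ)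
      = ∑ k : vv.support, ⟪∑ x : vv.support, ρ (c k x) (vv x.1),
          ∑ x : vv.support, ρ (c k x) (vv x.1)⟫_ℂ := by
    have e1 : ∀ k : vv.support, ⟪∑ x : vv.support, ρ (c k x) (vv x.1),
          ∑ x : vv.support, ρ (c k x) (vv x.1)⟫_ℂ
        = ∑ x : vv.support, ∑ x' : vv.support, ⟪ρ (c k x) (vv x.1), ρ (c k x') (vv x'.1)⟫_ℂ := by
      intro k
      rw [sum_inner]
      exact Finset.sum_congr rfl fun x _ => inner_sum _ _ _
    rw [Finset.sum_congr rfl fun k _ => e1 k]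
    simp only [Finsupp.sum]
    conv_rhs => rw [Finset.sum_comm]
    rw [← Finset.sum_coe_sort]
    refine Finset.sum_congr rfl fun x _ => ?_
    rw [← Finset.sum_coe_sort]
    conv_rhs => rw [Finset.sum_comm]
    refine Finset.sum_congr rfl fun x' _ => ?_
    exact hρ x' x _ _
  rw [e, map_sum]
  exact Finset.sum_nonneg fun k _ => inner_self_nonneg

end aux6

/-- Every ternary morphism `θ` of the algebraic tensor product of two
TROs factors as `θ(u ⊗ v) = φ(u) ψ(v)` for semi-commuting ternary morphisms `φ`, `ψ`. -/
theorem statement3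
    {K₁ L₁ H₂ K₂ H L : Type u}
    [NormedAddCommGroup K₁] [InnerProductSpace ℂ K₁] [CompleteSpace K₁]
    [NormedAddCommGroup L₁] [InnerProductSpace ℂ L₁] [CompleteSpace L₁]
    [NormedAddCommGroup H₂] [InnerProductSpace ℂ H₂] [CompleteSpace H₂]
    [NormedAddCommGroup K₂] [InnerProductSpace ℂ K₂] [CompleteSpace K₂]
    [NormedAddCommGroup H] [InnerProductSpace ℂ H] [CompleteSpace H]
    [NormedAddCommGroup L] [InnerProductSpace ℂ L] [CompleteSpace L]
    (𝒰 : Submodule ℂ (K₁ →L[ℂ] L₁)) (𝒱 : Submodule ℂ (H₂ →L[ℂ] K₂))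
    (h𝒰closed : IsClosed (𝒰 : Set (K₁ →L[ℂ] L₁)))
    (h𝒱closed : IsClosed (𝒱 : Set (H₂ →L[ℂ] K₂)))
    (h𝒰tro : ∀ S ∈ 𝒰, ∀ T ∈ 𝒰, ∀ R ∈ 𝒰, S ∘L (adjoint T) ∘L R ∈ 𝒰)
    (h𝒱tro : ∀ S ∈ 𝒱, ∀ T ∈ 𝒱, ∀ R ∈ 𝒱, S ∘L (adjoint T) ∘L R ∈ 𝒱)
    (θ : (↥𝒰 ⊗[ℂ] ↥𝒱) →ₗ[ℂ] (H →L[ℂ] L))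
    (hθ : ∀ (p : ℕ) (u₁ u₂ u₃ : Fin p → 𝒰) (v₁ v₂ v₃ : Fin p → 𝒱),
      ∑ j, ∑ k, ∑ l,
          θ ((⟨((u₁ j : K₁ →L[ℂ] L₁)) ∘L (adjoint (u₂ k : K₁ →L[ℂ] L₁)) ∘L
                ((u₃ l : K₁ →L[ℂ] L₁)),
              h𝒰tro _ (u₁ j).2 _ (u₂ k).2 _ (u₃ l).2⟩ : ↥𝒰) ⊗ₜ[ℂ]
             (⟨((v₁ j : H₂ →L[ℂ] K₂)) ∘L (adjoint (v₂ k : H₂ →L[ℂ] K₂)) ∘L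
                ((v₃ l : H₂ →L[ℂ] K₂)),
              h𝒱tro _ (v₁ j).2 _ (v₂ k).2 _ (v₃ l).2⟩ : ↥𝒱))
        = θ (∑ j, (u₁ j) ⊗ₜ[ℂ] (v₁ j)) ∘L
            (adjoint (θ (∑ k, (u₂ k) ⊗ₜ[ℂ] (v₂ k)))) ∘L
            θ (∑ l, (u₃ l) ⊗ₜ[ℂ] (v₃ l))) :
    ∃ (𝕂 : HilbertC.{u})
      (φ : ↥𝒰 →ₗ[ℂ] (𝕂.carrier →L[ℂ] L)) (ψ : ↥𝒱 →ₗ[ℂ] (H →L[ℂ] 𝕂.carrier)),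
      IsTernaryHom 𝒰 φ ∧ IsTernaryHom 𝒱 ψ ∧
      (∀ (u₁ u₂ : 𝒰) (v₁ v₂ : 𝒱),
        Commute ((adjoint (φ u₁)) ∘L (φ u₂)) ((ψ v₁) ∘L (adjoint (ψ v₂)))) ∧
      (∀ (u : 𝒰) (v : 𝒱), θ (u ⊗ₜ[ℂ] v) = (φ u) ∘L (ψ v)) := by

  have hθ' : ∀ (u₁ u₂ u₃ : 𝒰) (v₁ v₂ v₃ : 𝒱),
      θ (auxLmHom 𝒰 (auxPair 𝒰 h𝒰tro u₁ u₂) u₃ ⊗ₜ[ℂ] auxLmHom 𝒱 (auxPair 𝒱 h𝒱tro v₁ v₂) v₃)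
        = θ (u₁ ⊗ₜ[ℂ] v₁) ∘L adjoint (θ (u₂ ⊗ₜ[ℂ] v₂)) ∘L θ (u₃ ⊗ₜ[ℂ] v₃) := by
    intro u₁ u₂ u₃ v₁ v₂ v₃
    have := hθ 1 (fun _ => u₁) (fun _ => u₂) (fun _ => u₃) (fun _ => v₁) (fun _ => v₂)
      (fun _ => v₃)
    simp only [Finset.univ_unique, Finset.sum_singleton] at this
    exact this
  obtain ⟨ρ, σ, hρm, hρs, hσm, hσs, hcomm, hone, hσθ, hθθ⟩ :=
    aux_all_reps 𝒰 𝒱 h𝒰closed h𝒱closed h𝒰tro h𝒱tro θ hθ'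
  obtain ⟨𝕂, φ, ψ, h1, h2, h3, h4⟩ := aux_final (fun (u : 𝒰) (v : 𝒱) => θ (u ⊗ₜ v))
    (fun x y => ρ (auxPair 𝒰 h𝒰tro x y)) (fun x y => σ (auxPair 𝒱 h𝒱tro x y))
    (fun s t r => auxLmHom 𝒰 (auxPair 𝒰 h𝒰tro s t) r)
    (fun s t r => auxLmHom 𝒱 (auxPair 𝒱 h𝒱tro s t) r)
    (fun x y z => by rw [auxPair_add, map_add])
    (fun x c y => by rw [auxPair_smul, map_smul])
    (fun x y => by rw [hρs, auxPair_star])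
    (aux_pos 𝒰 h𝒰closed h𝒰tro ρ hρm hρs)
    (fun x u₁ u₂ u₃ => by rw [← hρm, auxPair_mul])
    (fun x y => by rw [hσs, auxPair_star])
    (fun x y v w => hcomm _ _)
    (fun v₁ v₂ v₃ u => hσθ _ _ _)
    (fun u v u' v' => hθθ _ _ _ _)
    (fun u v w => by rw [TensorProduct.tmul_add, map_add])
    (fun u c v => by rw [TensorProduct.tmul_smul, map_smul])
    (fun v => by
      obtain ⟨d, hd, hds, hdd⟩ := auxMul_defect 𝒱 h𝒱closed (v : H₂ →L[ℂ] K₂)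
        (auxMul_pair 𝒱 h𝒱tro v.2 v.2)
      have hd' : star (⟨d, hd⟩ : auxMul 𝒱) = ⟨d, hd⟩ := Subtype.ext hds
      have e : auxPair 𝒱 h𝒱tro v v + ⟨d, hd⟩ * ⟨d, hd⟩
        = ((‖(v : H₂ →L[ℂ] K₂)‖ : ℂ) ^ 2) • (1 : auxMul 𝒱) := Subtype.ext hdd
      refine ⟨‖(v : H₂ →L[ℂ] K₂)‖, σ ⟨d, hd⟩, norm_nonneg _, by rw [hσs, hd'],
        fun x y => hcomm _ _, fun x y => ?_⟩
      rw [← hσm, ← comp_add, ← map_add, e, map_smul, comp_smul, hone])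
  refine ⟨𝕂, φ, ψ, fun s t r h => ?_, fun s t r h => ?_, h3, h4⟩
  · exact h1 s t r
  · exact h2 s t r
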